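/- arXiv:1611.08422 — 2 statements merged into one kernel-verified Lean document; each statement's English description precedes it below -/
import Mathlib

section
/- Let f : 𝔹^N → 𝔹^N. If the asynchronous iteration graph Γ(f) is strongly connected, then G_f is regular on the metric space (X,d): the set of periodic points of G_f is dense in X. -/
/-!
A point `(S, E)` is approximated by a periodic point `(S', E)`. The first `m + 1` terms of `S`,
for `m` large, drive `E` to some configuration `y`; by strong connectedness some finite word leads from `y`
back to `E`. Let `L` be the prefix of length `m + 1` of `S` followed by that word, and `S'` the
`L.length`-periodic sequence repeating `L`. After `L.length` steps both coordinates of `(S', E)` are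
back at their initial values (`Gf_iterate`), while `S'` agrees with `S` on the first `m` terms at least, so
that the distance is at most `18 / 2 ^ m` (`dS_le_of_agree`).
-/

/-- Hamming distance on 𝔹^N : d_e(E,E') = Σ_k δ(E_k, E'_k), δ the discrete Boolean metric. -/
noncomputable def dE (N : ℕ) (E E' : Fin N → Bool) : ℝ :=
  ∑ k : Fin N, if E k = E' k then 0 else 1

/-- d_s(S,S') = (9/N) Σ_{k=1}^∞ |S^k − S'^k| / 10^k (sequences indexed from 0 in Lean). -/
noncomputable def dS (N : ℕ) (S S' : ℕ → Fin N) : ℝ :=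
  (9 / N) * ∑' k : ℕ, |((S k : ℕ) : ℝ) - ((S' k : ℕ) : ℝ)| / 10 ^ (k + 1)

/-- d((S,E),(S',E')) = d_e(E,E') + d_s(S,S') on X = ⟦1,N⟧^ℕ × 𝔹^N.
    (Points of X are stored as pairs (S, E).) -/
noncomputable def dX (N : ℕ) (X Y : (ℕ → Fin N) × (Fin N → Bool)) : ℝ :=
  dE N X.2 Y.2 + dS N X.1 Y.1

/-- F_f(k,E) : the k-th component is replaced by f(E)_k, the others are unchanged. -/
def Ff (N : ℕ) (f : (Fin N → Bool) → Fin N → Bool) (k : Fin N) (E : Fin N → Bool) :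
    Fin N → Bool :=
  fun j => if j = k then f E j else E j

/-- G_f(S,E) = (σ(S), F_f(S^0,E)), where σ is the shift. -/
def Gf (N : ℕ) (f : (Fin N → Bool) → Fin N → Bool)
    (X : (ℕ → Fin N) × (Fin N → Bool)) : (ℕ → Fin N) × (Fin N → Bool) :=
  (fun n => X.1 (n + 1), Ff N f (X.1 0) X.2)

/-- The vectorial Boolean negation. -/
def negAll (N : ℕ) : (Fin N → Bool) → Fin N → Bool := fun x i => !(x i)

/-- The asynchronous iteration graph Γ(f) is strongly connected: every vertex of 𝔹^N is
    reachable from every other along arcs x → F_f(i,x). -/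
def stronglyConnected (N : ℕ) (f : (Fin N → Bool) → Fin N → Bool) : Prop :=
  ∀ x y : Fin N → Bool, Relation.ReflTransGen (fun a b => ∃ i : Fin N, Ff N f i a = b) x y

/-- The configuration reached from `E` by updating successively the components listed in `L`. -/
def runWord (N : ℕ) (f : (Fin N → Bool) → Fin N → Bool) (L : List (Fin N)) (E : Fin N → Bool) :
    Fin N → Bool :=
  L.foldl (fun a i => Ff N f i a) E

lemma Gf_iterate (N : ℕ) (f : (Fin N → Bool) → Fin N → Bool) (S : ℕ → Fin N)
    (E : Fin N → Bool) (n : ℕ) :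
    (Gf N f)^[n] (S, E) = (fun k => S (k + n), runWord N f ((List.range n).map S) E) := by
  induction n with
  | zero => simp [runWord]
  | succ n ih =>
    rw [Function.iterate_succ_apply', ih]
    simp [Gf, runWord, List.range_succ, Nat.add_right_comm, Nat.add_assoc]

/-- A path in the asynchronous iteration graph is the run of a word. -/
lemma exists_runWord_of_reachable (N : ℕ) (f : (Fin N → Bool) → Fin N → Bool)
    {x y : Fin N → Bool}
    (h : Relation.ReflTransGen (fun a b => ∃ i : Fin N, Ff N f i a = b) x y) :
    ∃ L : List (Fin N), runWord N f L x = y := by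
  induction h with
  | refl => exact ⟨[], rfl⟩
  | tail _ hbc ih =>
    obtain ⟨L, rfl⟩ := ih
    obtain ⟨i, rfl⟩ := hbc
    exact ⟨L ++ [i], by simp [runWord]⟩

lemma dS_le_of_agree (N : ℕ) (hN : 1 ≤ N) (S S' : ℕ → Fin N) (m : ℕ)
    (h : ∀ k < m, S k = S' k) : dS N S S' ≤ 18 * (1 / 2 : ℝ) ^ m := by
  have hN0 : (0 : ℝ) < N := by exact_mod_cast hN
  have hg : HasSum (fun k : ℕ => (N * (1 / 2 : ℝ) ^ m) * (1 / 2 : ℝ) ^ k)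
      ((N * (1 / 2 : ℝ) ^ m) * 2) := hasSum_geometric_two.mul_left _
  have hle : ∀ k : ℕ, |((S k : ℕ) : ℝ) - ((S' k : ℕ) : ℝ)| / 10 ^ (k + 1)
      ≤ (N * (1 / 2 : ℝ) ^ m) * (1 / 2 : ℝ) ^ k := by
    intro k
    by_cases hk : k < m
    · rw [h k hk, sub_self, abs_zero, zero_div]
      positivity
    · have h1 : |((S k : ℕ) : ℝ) - ((S' k : ℕ) : ℝ)| ≤ N := by
        have a1 : ((S k : ℕ) : ℝ) ≤ N := by exact_mod_cast (S k).isLt.le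
        have a2 : ((S' k : ℕ) : ℝ) ≤ N := by exact_mod_cast (S' k).isLt.le
        have a3 : (0 : ℝ) ≤ ((S k : ℕ) : ℝ) := Nat.cast_nonneg _
        have a4 : (0 : ℝ) ≤ ((S' k : ℕ) : ℝ) := Nat.cast_nonneg _
        rw [abs_le]
        constructor <;> linarith
      -- for `m ≤ k`, `2 ^ m * 2 ^ k ≤ 4 ^ k ≤ 10 ^ (k + 1)`
      have h2 : (2 : ℝ) ^ m * 2 ^ k ≤ 10 ^ (k + 1) := by
        calc (2 : ℝ) ^ m * 2 ^ k ≤ 2 ^ k * 2 ^ k := by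
              gcongr
              · norm_num
              · omega
          _ = 4 ^ k := by rw [← mul_pow]; norm_num
          _ ≤ 10 ^ k := by gcongr; norm_num
          _ ≤ 10 ^ (k + 1) := by gcongr <;> norm_num
      calc |((S k : ℕ) : ℝ) - ((S' k : ℕ) : ℝ)| / 10 ^ (k + 1)
          ≤ N / (2 ^ m * 2 ^ k) := by gcongr
        _ = (N * (1 / 2 : ℝ) ^ m) * (1 / 2 : ℝ) ^ k := by
          simp only [one_div, inv_pow]
          field_simp
  have hs : Summable fun k : ℕ => |((S k : ℕ) : ℝ) - ((S' k : ℕ) : ℝ)| / 10 ^ (k + 1) :=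
    Summable.of_nonneg_of_le (fun k => by positivity) hle hg.summable
  have ht := hs.tsum_le_tsum hle hg.summable
  rw [hg.tsum_eq] at ht
  calc dS N S S' ≤ (9 / N) * ((N * (1 / 2 : ℝ) ^ m) * 2) := by
        unfold dS
        gcongr
    _ = 18 * (1 / 2 : ℝ) ^ m := by
        field_simp
        norm_num

/- STATEMENT 4: if Γ(f) is strongly connected then G_f is regular on (X,d): the set of
   periodic points of G_f is dense in X (density expressed with the metric d). -/
theorem Gf_regular_of_stronglyConnected (N : ℕ) (hN : 1 ≤ N)
    (f : (Fin N → Bool) → Fin N → Bool) (hf : stronglyConnected N f) :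
    ∀ X : (ℕ → Fin N) × (Fin N → Bool), ∀ ε > (0 : ℝ),
      ∃ P : (ℕ → Fin N) × (Fin N → Bool),
        dX N X P < ε ∧ ∃ n > 0, (Gf N f)^[n] P = P := by
  rintro ⟨S, E⟩ ε hε
  obtain ⟨m, hm⟩ := exists_pow_lt_of_lt_one (show (0 : ℝ) < ε / 18 by positivity)
    (show (1 / 2 : ℝ) < 1 by norm_num)
  obtain ⟨l, hl⟩ := exists_runWord_of_reachable N f
    (hf (runWord N f ((List.range (m + 1)).map S) E) E)
  -- a prefix of length `m + 1` makes the period positive even if `m = 0` and `l = []`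
  obtain ⟨L, hL⟩ : ∃ L, L = (List.range (m + 1)).map S ++ l := ⟨_, rfl⟩
  have hlen : L.length = m + 1 + l.length := by simp [hL]
  have hpos : 0 < L.length := by omega
  have hrun : runWord N f L E = E := by
    rw [hL]
    simpa only [runWord, List.foldl_append] using hl
  obtain ⟨S', hS'⟩ : ∃ S' : ℕ → Fin N, S' = fun k => L[k % L.length]'(Nat.mod_lt _ hpos) :=
    ⟨_, rfl⟩
  refine ⟨(S', E), ?_, L.length, hpos, ?_⟩
  · have hagree : ∀ k < m, S k = S' k := by
      intro k hk
      have hmod : k % L.length = k := Nat.mod_eq_of_lt (by omega)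
      simp only [hS', hmod]
      simp only [hL]
      rw [List.getElem_append_left (by simp; omega)]
      simp
    have hd := dS_le_of_agree N hN S S' m hagree
    have hE : dE N E E = 0 := by simp [dE]
    show dE N E E + dS N S S' < ε
    linarith
  · have hmap : (List.range L.length).map S' = L := by
      apply List.ext_getElem
      · simp
      · intro k h1 h2
        simp [hS', Nat.mod_eq_of_lt h2]
    rw [Gf_iterate, hmap, hrun]
    simp [hS']
end

section
/- For every bijection ε_k : 𝔹^N → 𝔹^N and g = ε_k ∘ F_{f₀} with f₀ the vectorial Boolean negation, the directed graph 𝒢_g is strongly connected: for all x, x̌ ∈ 𝔹^N there exists a block m ∈ ⟦0, 2^N − 1⟧ with g(m,x) = x̌. Consequently, the CBC mode of operation G_g(x,m) = (g(m^0,x), σ(m)) on 𝔹^N × 𝒮_N is chaotic in the sense of Devaney for the product topology. -/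
/-!
Masking with the negation makes `Fcbc N (negAll N) x m` the exclusive or of `x` with the bits of
`m`. Every bit pattern is the expansion of some block, so `ε` being onto gives a block leading
from any state to any other in one step.

For the dynamics, a neighbourhood of `(x, s)` in the product of finite discrete spaces only fixes
`x` and finitely many blocks `s 0, …, s (n - 1)`. The state after `n` steps depends on these
data alone, so the free block at position `n` can be chosen to steer that state to any target `y`
at time `n + 1`. If the blocks after position `n` are those of a sequence `t`, the orbit reaches
exactly `(y, t)`, which gives transitivity; with `y = x` and the first `n + 1` blocks repeated
periodically, the orbit closes up, which gives density of periodic points.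
-/

/-- The j-th bit (counting from the left, j = 1..N rendered as j : Fin N) of the block
    m ∈ ⟦0, 2^N − 1⟧ in the binary numeral system. -/
def blockBit (N : ℕ) (m : Fin (2 ^ N)) (j : Fin N) : Bool :=
  Nat.testBit m.val (N - 1 - j.val)

/-- The CBC update function F_f(x,m) = (x_j·m_j + f(x)_j·¬m_j)_{j=1..N} : the j-th bit of x
    is replaced by f(x)_j exactly when the j-th bit of the block m is 1. -/
def Fcbc (N : ℕ) (f : (Fin N → Bool) → Fin N → Bool)
    (x : Fin N → Bool) (m : Fin (2 ^ N)) : Fin N → Bool :=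
  fun j => if blockBit N m j then f x j else x j

/-- g(m,x) = ε_k(F_{f₀}(x,m)) : the CBC one-step transition for the keyed block cipher ε_k. -/
def gCBC (N : ℕ) (ε : (Fin N → Bool) → Fin N → Bool)
    (m : Fin (2 ^ N)) (x : Fin N → Bool) : Fin N → Bool :=
  ε (Fcbc N (negAll N) x m)

/-- The CBC mode of operation as a dynamical system on 𝔹^N × 𝒮_N,
    G_g(x,m) = (g(m⁰,x), σ(m)). -/
def GCBC (N : ℕ) (ε : (Fin N → Bool) → Fin N → Bool)
    (X : (Fin N → Bool) × (ℕ → Fin (2 ^ N))) : (Fin N → Bool) × (ℕ → Fin (2 ^ N)) :=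
  (gCBC N ε (X.2 0) X.1, fun n => X.2 (n + 1))

lemma exists_block_bits (N : ℕ) (b : Fin N → Bool) :
    ∃ m : Fin (2 ^ N), ∀ j, blockBit N m j = b j := by
  -- `Nat.ofBits` takes the least significant bit first, `blockBit` the most significant.
  refine ⟨⟨Nat.ofBits (fun i => b i.rev), Nat.ofBits_lt_two_pow _⟩, fun j => ?_⟩
  have hj : N - 1 - j.val < N := by omega
  simp only [blockBit]
  rw [Nat.testBit_ofBits_lt _ _ hj]
  congr 1
  ext
  simp only [Fin.val_rev]
  omega

lemma exists_block_gCBC {N : ℕ} {ε : (Fin N → Bool) → Fin N → Bool}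
    (hε : Function.Surjective ε) (x y : Fin N → Bool) :
    ∃ m : Fin (2 ^ N), gCBC N ε m x = y := by
  obtain ⟨z, rfl⟩ := hε y
  obtain ⟨m, hm⟩ := exists_block_bits N (fun j => xor (x j) (z j))
  refine ⟨m, congrArg ε (funext fun j => ?_)⟩
  simp only [Fcbc, hm, negAll]
  cases x j <;> cases z j <;> rfl

lemma GCBC_iterate_snd (N : ℕ) (ε : (Fin N → Bool) → Fin N → Bool)
    (X : (Fin N → Bool) × (ℕ → Fin (2 ^ N))) (n i : ℕ) :
    ((GCBC N ε)^[n] X).2 i = X.2 (i + n) := by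
  induction n generalizing i with
  | zero => rfl
  | succ n ih =>
    rw [Function.iterate_succ_apply']
    simp only [GCBC, ih]
    rw [show i + 1 + n = i + (n + 1) by omega]

/-- The state after `n` steps depends only on the initial state and the first `n` blocks. -/
lemma GCBC_iterate_fst_congr (N : ℕ) (ε : (Fin N → Bool) → Fin N → Bool) (x : Fin N → Bool)
    {s t : ℕ → Fin (2 ^ N)} (n : ℕ) (h : ∀ i < n, t i = s i) :
    ((GCBC N ε)^[n] (x, t)).1 = ((GCBC N ε)^[n] (x, s)).1 := by
  induction n with
  | zero => rfl
  | succ n ih =>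
    rw [Function.iterate_succ_apply', Function.iterate_succ_apply']
    simp only [GCBC, GCBC_iterate_snd, Nat.zero_add]
    rw [ih fun i hi => h i (by omega), h n (by omega)]

/-- The block at position `n` can be chosen so as to impose the state at time `n + 1`, whatever
the blocks after it. -/
lemma exists_steering_block {N : ℕ} {ε : (Fin N → Bool) → Fin N → Bool}
    (hε : Function.Surjective ε) (x y : Fin N → Bool) (s : ℕ → Fin (2 ^ N)) (n : ℕ) :
    ∃ m : Fin (2 ^ N), ∀ t : ℕ → Fin (2 ^ N), (∀ i < n, t i = s i) → t n = m →
      ((GCBC N ε)^[n + 1] (x, t)).1 = y := by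
  obtain ⟨m, hm⟩ := exists_block_gCBC hε ((GCBC N ε)^[n] (x, s)).1 y
  refine ⟨m, fun t ht htn => ?_⟩
  rw [Function.iterate_succ_apply']
  simp only [GCBC, GCBC_iterate_snd, Nat.zero_add]
  rw [GCBC_iterate_fst_congr N ε x n ht, htn, hm]

/-- Cylinder sets form neighbourhood bases. -/
lemma exists_cylinder_subset {N : ℕ} {U : Set ((Fin N → Bool) × (ℕ → Fin (2 ^ N)))}
    (hU : IsOpen U) {x : Fin N → Bool} {s : ℕ → Fin (2 ^ N)} (hx : (x, s) ∈ U) :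
    ∃ n : ℕ, ∀ t : ℕ → Fin (2 ^ N), (∀ i < n, t i = s i) → (x, t) ∈ U := by
  have hV : IsOpen {t : ℕ → Fin (2 ^ N) | (x, t) ∈ U} := hU.preimage (by fun_prop)
  obtain ⟨I, u, hu, hsub⟩ := isOpen_pi_iff.1 hV s hx
  refine ⟨I.sup id + 1, fun t ht => hsub fun i hi => ?_⟩
  rw [ht i (Nat.lt_succ_of_le (Finset.le_sup (f := id) hi))]
  exact (hu i hi).2

/- STATEMENT 16: for every bijection ε_k of 𝔹^N, the graph 𝒢_g is strongly connected (any
   state x̌ is reachable from any x in one step: ∃ m, g(m,x) = x̌); consequently, the CBC mode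
   of operation G_g is chaotic in the sense of Devaney for the product topology (dense
   periodic points and topological transitivity). -/
theorem CBC_graph_stronglyConnected_and_chaotic (N : ℕ) (hN : 1 ≤ N)
    (ε : (Fin N → Bool) → Fin N → Bool) (hε : Function.Bijective ε) :
    (∀ x y : Fin N → Bool, ∃ m : Fin (2 ^ N), gCBC N ε m x = y) ∧
    ((Dense {X : (Fin N → Bool) × (ℕ → Fin (2 ^ N)) | ∃ n > 0, (GCBC N ε)^[n] X = X}) ∧
     (∀ U V : Set ((Fin N → Bool) × (ℕ → Fin (2 ^ N))),
        IsOpen U → IsOpen V → U.Nonempty → V.Nonempty →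
          ∃ k > 0, ((GCBC N ε)^[k] '' U ∩ V).Nonempty)) := by
  refine ⟨exists_block_gCBC hε.surjective, ?_, ?_⟩
  · rw [dense_iff_inter_open]
    rintro U hU ⟨⟨x, s⟩, hx⟩
    obtain ⟨n, hn⟩ := exists_cylinder_subset hU hx
    obtain ⟨m, hm⟩ := exists_steering_block hε.surjective x x s n
    -- the word `s 0, …, s (n - 1), m` repeated with period `n + 1`
    let t : ℕ → Fin (2 ^ N) := fun i => if i % (n + 1) < n then s (i % (n + 1)) else m
    have ht : ∀ i < n, t i = s i := fun i hi => by
      simp only [t, Nat.mod_eq_of_lt (show i < n + 1 by omega), hi, if_true]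
    have htn : t n = m := by
      simp only [t, Nat.mod_eq_of_lt (Nat.lt_succ_self n), lt_irrefl, if_false]
    refine ⟨(x, t), hn t ht, n + 1, by omega, Prod.ext (hm t ht htn) (funext fun i => ?_)⟩
    rw [GCBC_iterate_snd]
    simp only [t, Nat.add_mod_right]
  · rintro U V hU - ⟨⟨x, s⟩, hx⟩ ⟨⟨y, r⟩, hy⟩
    obtain ⟨n, hn⟩ := exists_cylinder_subset hU hx
    obtain ⟨m, hm⟩ := exists_steering_block hε.surjective x y s n
    -- the word `s 0, …, s (n - 1), m` followed by `r`
    let t : ℕ → Fin (2 ^ N) := fun i => if i < n then s i else if i = n then m else r (i - (n + 1))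
    have ht : ∀ i < n, t i = s i := fun i hi => if_pos hi
    have htn : t n = m := by simp [t]
    have hG : (GCBC N ε)^[n + 1] (x, t) = (y, r) := by
      refine Prod.ext (hm t ht htn) (funext fun i => ?_)
      rw [GCBC_iterate_snd]
      simp only [t]
      rw [if_neg (by omega), if_neg (by omega), Nat.add_sub_cancel]
    exact ⟨n + 1, by omega, (y, r), ⟨(x, t), hn t ht, hG⟩, hy⟩
end
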